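/- Let n ≥ 1, let U ⊆ GL(n,q) be the subgroup of unipotent upper-triangular matrices u with u_{ii} = 1 for all i and u_{ij} = 0 whenever i < j ≤ n−1 (so the only possibly nonzero off-diagonal entries of u lie in the last column), and embed GL(n−1,q) × GL(1,q) into GL(n,q) as block-diagonal matrices; this subgroup normalizes U. Then for every irreducible complex representation (π,V) of GL(n,q), the representation of GL(n−1,q) × GL(1,q) on the subspace V^U of U-invariant vectors is multiplicity free: every irreducible complex representation of GL(n−1,q) × GL(1,q) occurs in V^U with multiplicity at most 1. (Multiplicity-freeness of parabolic branching, the content of Theorem 2.10 and Theorem 2.12, Remark 2.) -/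

import Mathlib

/-!
STATEMENT 9: multiplicity-freeness of parabolic branching (the content of Theorem 2.10 and
Theorem 2.12, Remark 2).
-/

variable (F : Type) [Field F] [Fintype F] [DecidableEq F]

/-- `GL(n,q)`, the group of invertible `n × n` matrices over the finite field `F` (`q = |F|`). -/
abbrev GLn (n : ℕ) := GL (Fin n) F

/-- The subgroup `U ⊆ GL(n+1,q)` of unipotent upper-triangular matrices whose only possibly
nonzero off-diagonal entries lie in the last column. -/
def IsUcol {n : ℕ} (u : GLn F (n + 1)) : Prop :=
  (∀ i : Fin (n + 1), (u : Matrix (Fin (n + 1)) (Fin (n + 1)) F) i i = 1) ∧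
  (∀ i j : Fin (n + 1), i ≠ j → j ≠ Fin.last n →
    (u : Matrix (Fin (n + 1)) (Fin (n + 1)) F) i j = 0)

/-- Block-diagonal matrix with blocks `a ∈ GL(n,q)` and `b ∈ GL(m,q)`; for `m = 1` this is
the embedding of `GL(n,q) × GL(1,q)` into `GL(n+1,q)` as block-diagonal matrices. -/
noncomputable def blockDiagGL {n m : ℕ} (a : GLn F n) (b : GLn F m) : GLn F (n + m) :=
  Matrix.GeneralLinearGroup.mkOfDetNeZero
    ((Matrix.fromBlocks (a : Matrix (Fin n) (Fin n) F) 0 0 (b : Matrix (Fin m) (Fin m) F)).submatrix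
      finSumFinEquiv.symm finSumFinEquiv.symm)
    (by
      rw [Matrix.det_submatrix_equiv_self, Matrix.det_fromBlocks_zero₂₁]
      exact mul_ne_zero
        (((Matrix.isUnit_iff_isUnit_det _).mp a.isUnit).ne_zero)
        (((Matrix.isUnit_iff_isUnit_det _).mp b.isUnit).ne_zero))

/-- The subspace `V^U` of `U`-invariant vectors of a representation `π` of `GL(n+1,q)`. -/
def invariantsUcol {n : ℕ} {V : Type} [AddCommGroup V] [Module ℂ V]
    (π : Representation ℂ (GLn F (n + 1)) V) : Submodule ℂ V where
  carrier := {v | ∀ u : GLn F (n + 1), IsUcol F u → π u v = v}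
  add_mem' := by
    intro a b ha hb u hu
    rw [map_add, ha u hu, hb u hu]
  zero_mem' := by
    intro u hu
    rw [map_zero]
  smul_mem' := by
    intro c v hv u hu
    rw [map_smul, hv u hu]

/-- The space of `GL(n,q) × GL(1,q)`-equivariant linear maps from `(σ, W)` to the subspace
`V^U` of `U`-invariant vectors of `(π, V)` (the intertwining space whose dimension is the
multiplicity of `σ` in `V^U`). -/
def homSpace {n : ℕ} {V W : Type} [AddCommGroup V] [Module ℂ V] [AddCommGroup W] [Module ℂ W]
    (π : Representation ℂ (GLn F (n + 1)) V)
    (σ : Representation ℂ (GLn F n × GLn F 1) W) : Submodule ℂ (W →ₗ[ℂ] V) where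
  carrier := {f | (∀ w : W, f w ∈ invariantsUcol F π) ∧
    ∀ (h : GLn F n × GLn F 1) (w : W),
      f (σ h w) = π ((blockDiagGL F h.1 h.2 : GLn F (n + 1))) (f w)}
  add_mem' := by
    rintro f g ⟨hf1, hf2⟩ ⟨hg1, hg2⟩
    refine ⟨fun w => Submodule.add_mem _ (hf1 w) (hg1 w), fun h w => ?_⟩
    simp [LinearMap.add_apply, hf2 h w, hg2 h w]
  zero_mem' := by
    exact ⟨fun w => Submodule.zero_mem _, fun h w => by simp⟩
  smul_mem' := by
    rintro c f ⟨hf1, hf2⟩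
    refine ⟨fun w => Submodule.smul_mem _ _ (hf1 w), fun h w => ?_⟩
    simp [LinearMap.smul_apply, hf2 h w]

/-!
Transposition `τ` on `GL(n+1)` preserves the Levi subgroup `L = GL(n) × GL(1)`, and every matrix is
conjugate to its transpose, so every irreducible representation of `GL(n+1)` or of `L` carries a
nondegenerate contravariant form. With respect to these forms a nonzero `L`-map `f₁ : W → V^U` has
an adjoint `p : V → W`.

Every matrix becomes symmetric after left multiplication by some invertible symmetric matrix
(Taussky–Zassenhaus). Applied to the upper left block of `g`, and combined with a choice of last
column, this gives `u ∈ U` and `l ∈ L` with `l * g * u` and `l` symmetric, so `τ (g * u)` is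
`L`-conjugate to `g * u`. Hence for every `L`-map `f₂ : W → V^U` the operator `X = f₂ ∘ p` satisfies
`tr (π (τ g) X) = tr (π g X)` for all `g`, which by Burnside's theorem makes `X` self-adjoint
(Gelfand's trick). Since `f₁ ∘ p` and `f₂ ∘ p` are both self-adjoint, the range of `f₂` is contained
in that of `f₁`, and Schur's lemma makes `f₂` a multiple of `f₁`.
-/

section BalancedForm

open Polynomial

/-- A symmetric bilinear form, nondegenerate in the sense that its left kernel vanishes, for which
every scalar of `A` acts as a self-adjoint operator. -/
structure IsBalancedForm {R M : Type*} (A : Type*) [CommRing R] [AddCommGroup M] [Module R M]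
    [SMul A M] (B : LinearMap.BilinForm R M) : Prop where
  isSymm : B.IsSymm
  separatingLeft : B.SeparatingLeft
  smul_left : ∀ (a : A) (x y : M), B (a • x) y = B x (a • y)

variable {R A M N : Type*} [CommRing R] [AddCommGroup M] [Module R M] [AddCommGroup N] [Module R N]

theorem IsBalancedForm.comp_linearEquiv [CommRing A] [Algebra R A] [Module A M] [Module A N]
    [IsScalarTower R A M] [IsScalarTower R A N] {B : LinearMap.BilinForm R N}
    (hB : IsBalancedForm A B) (e : M ≃ₗ[A] N) :
    IsBalancedForm A (B.comp (e.restrictScalars R : M →ₗ[R] N) (e.restrictScalars R)) where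
  isSymm := ⟨fun x y => hB.isSymm.eq (e x) (e y)⟩
  separatingLeft x hx := e.map_eq_zero_iff.1 <| hB.separatingLeft (e x) fun y => by
    simpa using hx (e.symm y)
  smul_left a x y := by simpa using hB.smul_left a (e x) (e y)

theorem isBalancedForm_sum_proj {ι : Type*} [Fintype ι] {M : ι → Type*}
    [∀ i, AddCommGroup (M i)] [∀ i, Module R (M i)] [∀ i, SMul A (M i)]
    {B : ∀ i, LinearMap.BilinForm R (M i)} (hB : ∀ i, IsBalancedForm A (B i)) :
    IsBalancedForm A (∑ i, (B i).comp (LinearMap.proj i) (LinearMap.proj i)) where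
  isSymm := ⟨fun x y => by simp [fun i => (hB i).isSymm.eq (x i) (y i)]⟩
  separatingLeft x hx := by
    classical
    funext i
    refine (hB i).separatingLeft (x i) fun y => ?_
    have hsum := hx (Pi.single i y)
    simp only [LinearMap.sum_apply, LinearMap.BilinForm.comp_apply, LinearMap.proj_apply] at hsum
    rwa [Finset.sum_eq_single i (fun j _ hj => by simp [hj]) (by simp), Pi.single_eq_same] at hsum
  smul_left a x y := by simp [fun i => (hB i).smul_left a (x i) (y i)]

theorem isBalancedForm_mul_compr {C : Type*} [CommRing C] [Algebra R C] [SMul A C]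
    [IsScalarTower A C C] {f : C →ₗ[R] R}
    (hf : ∀ x, (∀ y, f (x * y) = 0) → x = 0) :
    IsBalancedForm A ((LinearMap.mul R C).compr₂ f) where
  isSymm := ⟨fun x y => by simp [mul_comm]⟩
  separatingLeft := hf
  smul_left a x y := congrArg f <| by
    rw [LinearMap.mul_apply', LinearMap.mul_apply', mul_comm x, smul_mul_assoc, smul_mul_assoc,
      mul_comm y]

/-- Multiplying a nonzero remainder by a power of `X` moves its leading coefficient to degree
`natDegree P - 1`, where no reduction modulo `P` takes place. -/
theorem eq_zero_of_forall_lcoeff_modByMonic_mul_eq_zero {P f : R[X]} (hP : P.Monic)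
    (hf : ∀ g, (f * g %ₘ P).coeff (P.natDegree - 1) = 0) : f %ₘ P = 0 := by
  nontriviality R
  by_contra hr
  set r := f %ₘ P with hr_def
  set g : R[X] := X ^ (P.natDegree - 1 - r.natDegree) with hg
  have hP_ne : P ≠ 1 := by
    rintro rfl
    simp [hr_def] at hr
  have hlt : r.natDegree < P.natDegree := natDegree_modByMonic_lt f hP hP_ne
  have hdeg : (r * g).natDegree = P.natDegree - 1 := by
    rw [hg, natDegree_mul_X_pow _ hr]
    omega
  have hmod : f * g %ₘ P = r * g := calc
    f * g %ₘ P = r * g %ₘ P := .symm <| modByMonic_eq_of_dvd_sub hP <| by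
      simpa only [sub_mul] using (dvd_modByMonic_sub f P).mul_right g
    _ = r * g := (modByMonic_eq_self_iff hP).2 (degree_lt_degree (by omega))
  have hlead : (r * g).leadingCoeff = r.leadingCoeff := leadingCoeff_mul_X_pow
  have hcoeff := hf g
  rw [hmod, ← hdeg, coeff_natDegree, hlead] at hcoeff
  exact hr (leadingCoeff_eq_zero.1 hcoeff)

theorem exists_isBalancedForm_quotient_span_singleton {P : R[X]} (hP : P.Monic) :
    ∃ B : LinearMap.BilinForm R (R[X] ⧸ Ideal.span {P}), IsBalancedForm R[X] B := by
  let f : (R[X] ⧸ Ideal.span {P}) →ₗ[R] R :=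
    lcoeff R (P.natDegree - 1) ∘ₗ AdjoinRoot.modByMonicHom hP
  refine ⟨_, isBalancedForm_mul_compr (f := f) fun x hx => ?_⟩
  obtain ⟨p, rfl⟩ := Ideal.Quotient.mk_surjective x
  rw [Ideal.Quotient.eq_zero_iff_mem, Ideal.mem_span_singleton, ← modByMonic_eq_zero_iff_dvd hP]
  refine eq_zero_of_forall_lcoeff_modByMonic_mul_eq_zero hP fun q => ?_
  exact hx (Ideal.Quotient.mk _ q)

variable {K V : Type*} [Field K] [AddCommGroup V] [Module K V] [FiniteDimensional K V]

theorem exists_isBalancedForm_aeval (φ : Module.End K V) :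
    ∃ B : LinearMap.BilinForm K (Module.AEval' φ), IsBalancedForm K[X] B := by
  classical
  obtain ⟨ι, _, p, hp, e, ⟨E⟩⟩ := Module.equiv_directSum_of_isTorsion
    (Module.AEval.isTorsion_of_finiteDimensional K V φ)
  have hform (i : ι) :
      ∃ B : LinearMap.BilinForm K (K[X] ⧸ Ideal.span {p i ^ e i}), IsBalancedForm K[X] B := by
    rw [← Ideal.span_singleton_eq_span_singleton.2 (normalize_associated (p i ^ e i))]
    exact exists_isBalancedForm_quotient_span_singleton
      (monic_normalize (pow_ne_zero _ (hp i).ne_zero))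
  choose B hB using hform
  exact ⟨_, (isBalancedForm_sum_proj hB).comp_linearEquiv
    (E.trans (DirectSum.linearEquivFunOnFintype _ _ _))⟩

theorem exists_isSymm_separatingLeft_isSelfAdjoint (φ : Module.End K V) :
    ∃ B : LinearMap.BilinForm K V, B.IsSymm ∧ B.SeparatingLeft ∧ B.IsSelfAdjoint φ := by
  obtain ⟨B, hB⟩ := exists_isBalancedForm_aeval φ
  let e := Module.AEval'.of φ
  refine ⟨B.comp (e : V →ₗ[K] _) e, ⟨fun x y => hB.isSymm.eq _ _⟩, fun x hx => ?_, fun x y => ?_⟩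
  · exact e.map_eq_zero_iff.1 (hB.separatingLeft _ fun y => by simpa using hx (e.symm y))
  · simpa [e, Module.AEval'.X_smul_of] using hB.smul_left X (e x) (e y)

end BalancedForm

section SymmetricSimilarity

open Matrix

theorem exists_sub_smul_mem_of_sup_span_singleton_eq_top {K V : Type*} [Field K]
    [AddCommGroup V] [Module K V] {R : Submodule K V} {x y : V}
    (hx : R ⊔ K ∙ x = ⊤) (hy : R ⊔ K ∙ y = ⊤) : ∃ z : Kˣ, y - z • x ∈ R := by
  have hspan {w : V} (hw : R ⊔ K ∙ w = ⊤) : (K ∙ R.mkQ w) = ⊤ := by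
    rwa [← Set.image_singleton, ← Submodule.map_span, Submodule.map_mkQ_eq_top]
  obtain ⟨z, hz⟩ := Submodule.span_singleton_eq_span_singleton.1 ((hspan hx).trans (hspan hy).symm)
  exact ⟨z, (Submodule.Quotient.eq R).1 hz.symm⟩

section CommRing

variable {R m ι : Type*} [CommRing R] [Fintype m] [DecidableEq m] [Fintype ι] [DecidableEq ι]

theorem range_mulVecLin_sup_range_mulVecLin_eq_top_of_isUnit_fromBlocks {A : Matrix m m R}
    {b : Matrix m ι R} {c : Matrix ι m R} {d : Matrix ι ι R} (hg : IsUnit (fromBlocks A b c d)) :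
    LinearMap.range A.mulVecLin ⊔ LinearMap.range b.mulVecLin = ⊤ := by
  refine eq_top_iff.2 fun y _ => ?_
  obtain ⟨w, hw⟩ := mulVec_surjective_iff_isUnit.2 hg (Sum.elim y 0)
  rw [fromBlocks_mulVec] at hw
  have hy : A *ᵥ (w ∘ Sum.inl) + b *ᵥ (w ∘ Sum.inr) = y := congrArg (· ∘ Sum.inl) hw
  exact hy ▸ Submodule.add_mem_sup ⟨_, rfl⟩ ⟨_, rfl⟩

/-- The transpose of an invertible matrix, as an invertible matrix. -/
def glTranspose (g : GL m R) : GL m R where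
  val := (g : Matrix m m R)ᵀ
  inv := ((g⁻¹ : GL m R) : Matrix m m R)ᵀ
  val_inv := by rw [← transpose_mul, Units.inv_mul, transpose_one]
  inv_val := by rw [← transpose_mul, Units.mul_inv, transpose_one]

@[simp]
theorem coe_glTranspose (g : GL m R) : (glTranspose g : Matrix m m R) = (g : Matrix m m R)ᵀ :=
  rfl

end CommRing

variable {K m ι : Type*} [Field K] [Fintype m] [DecidableEq m] [Fintype ι] [DecidableEq ι]
  [Unique ι]

theorem exists_isSymm_mul_isSymm (A : Matrix m m K) :
    ∃ S : GL m K, (S : Matrix m m K).IsSymm ∧ (S * A : Matrix m m K).IsSymm := by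
  obtain ⟨B, hsymm, hsep, hadj⟩ := exists_isSymm_separatingLeft_isSelfAdjoint (toLin' A)
  let S := LinearMap.toMatrix₂' K B
  have hSB : toLinearMap₂' K S = B := toLinearMap₂'_toMatrix' B
  have hS : S.IsSymm := Matrix.IsSymm.ext fun i j => hsymm.eq _ _
  have hdet : S.det ≠ 0 := by
    rwa [← LinearMap.separatingLeft_toLinearMap₂'_iff_det_ne_zero, hSB]
  have hSA : Aᵀ * S = S * A := by
    rw [← hSB] at hadj
    exact (isAdjointPair_toLinearMap₂' S S A A).1 hadj
  refine ⟨GeneralLinearGroup.mkOfDetNeZero S hdet, hS, ?_⟩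
  rw [Matrix.IsSymm, transpose_mul]
  exact (congrArg (Aᵀ * ·) hS).trans hSA

theorem isConj_glTranspose (g : GL m K) : IsConj g (glTranspose g) := by
  obtain ⟨S, hS, hSg⟩ := exists_isSymm_mul_isSymm (g : Matrix m m K)
  refine ⟨toUnits S, Units.ext ?_⟩
  rw [Matrix.IsSymm, transpose_mul, hS] at hSg
  exact hSg.symm

theorem exists_transpose_sub_smul_eq_mul_of_isSymm {A : Matrix m m K} {b : Matrix m ι K}
    {c : Matrix ι m K} {d : Matrix ι ι K} (hg : IsUnit (fromBlocks A b c d)) (hA : A.IsSymm) :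
    ∃ (z : Kˣ) (v : Matrix m ι K), cᵀ - z • b = A * v := by
  have hsup {b' : Matrix m ι K} {c' : Matrix ι m K} {d' : Matrix ι ι K}
      (hg' : IsUnit (fromBlocks A b' c' d')) :
      LinearMap.range A.mulVecLin ⊔ K ∙ b'.col default = ⊤ := by
    have htop := range_mulVecLin_sup_range_mulVecLin_eq_top_of_isUnit_fromBlocks hg'
    rwa [range_mulVecLin b', Set.range_unique] at htop
  have hgT : IsUnit (fromBlocks A cᵀ bᵀ dᵀ) := by
    rwa [← isUnit_transpose, fromBlocks_transpose, hA] at hg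
  obtain ⟨z, v, hv⟩ := exists_sub_smul_mem_of_sup_span_singleton_eq_top (hsup hg) (hsup hgT)
  refine ⟨z, replicateCol ι v, ?_⟩
  ext i j
  rw [Unique.eq_default j]
  exact (congrFun hv i).symm

theorem exists_isSymm_fromBlocks_mul_isSymm {A : Matrix m m K} {b : Matrix m ι K}
    {c : Matrix ι m K} {d : Matrix ι ι K} (hg : IsUnit (fromBlocks A b c d)) :
    ∃ (S : GL m K) (v : Matrix m ι K), (S : Matrix m m K).IsSymm ∧
      (fromBlocks (S : Matrix m m K) 0 0 1 *
        (fromBlocks A b c d * fromBlocks 1 v 0 1)).IsSymm := by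
  obtain ⟨S, hS, hSA⟩ := exists_isSymm_mul_isSymm A
  have hSg : IsUnit (fromBlocks (S.val * A) (S.val * b) c d) := by
    have hL : IsUnit (fromBlocks (S : Matrix m m K) 0 0 (1 : Matrix ι ι K)) :=
      isUnit_fromBlocks_zero₁₂.2 ⟨S.isUnit, isUnit_one⟩
    simpa [fromBlocks_multiply] using hL.mul hg
  obtain ⟨z, v, hv⟩ := exists_transpose_sub_smul_eq_mul_of_isSymm hSg hSA
  have hcol : z • (S : Matrix m m K) * (A * z⁻¹ • v + b) = cᵀ := by
    rw [sub_eq_iff_eq_add] at hv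
    simp [hv, Matrix.mul_add, Matrix.mul_assoc]
  refine ⟨z • S, z⁻¹ • v, hS.smul z, ?_⟩
  simp only [fromBlocks_multiply, Units.val_smul, Matrix.mul_one, Matrix.mul_zero,
    Matrix.zero_mul, Matrix.one_mul, add_zero, zero_add]
  rw [isSymm_fromBlocks_iff, hcol, transpose_transpose, Matrix.smul_mul]
  exact ⟨hSA.smul z, rfl, rfl, IsSymm.ext fun i j => by rw [Subsingleton.elim i j]⟩

end SymmetricSimilarity

section AntiInvolution

/-- An anti-automorphism of order at most two. It is kept unbundled, as a predicate on a plain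
function `τ`, so that products `τ (a * b)` can be rewritten without passing to `Mᵐᵒᵖ`. -/
structure IsAntiInvolution {M : Type*} [Mul M] (τ : M → M) : Prop where
  map_mul : ∀ a b, τ (a * b) = τ b * τ a
  involutive : Function.Involutive τ

theorem IsAntiInvolution.prodMap {M N : Type*} [Mul M] [Mul N] {τ : M → M} {τ' : N → N}
    (hτ : IsAntiInvolution τ) (hτ' : IsAntiInvolution τ') :
    IsAntiInvolution (Prod.map τ τ') where
  map_mul a b := Prod.ext (hτ.map_mul a.1 b.1) (hτ'.map_mul a.2 b.2)
  involutive := hτ.involutive.prodMap hτ'.involutive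

theorem isAntiInvolution_glTranspose {R m : Type*} [CommRing R] [Fintype m] [DecidableEq m] :
    IsAntiInvolution (glTranspose : GL m R → GL m R) where
  map_mul a b := Units.ext (by simp)
  involutive a := Units.ext (by simp)

theorem isConj_prodMk {M N : Type*} [Monoid M] [Monoid N] {a b : M} {c d : N} (hab : IsConj a b)
    (hcd : IsConj c d) : IsConj (a, c) (b, d) := by
  obtain ⟨x, hx⟩ := hab
  obtain ⟨y, hy⟩ := hcd
  exact ⟨MulEquiv.prodUnits.symm (x, y), Prod.ext hx hy⟩

end AntiInvolution

section Parabolic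

open Matrix

variable {K : Type} [Field K] {n : ℕ}

/-- The embedding `(a, b) ↦ diag(a, b)` of the Levi subgroup `GL(n) × GL(1)` into `GL(n + 1)`. -/
noncomputable def blockDiagHom : GLn K n × GLn K 1 →* GLn K (n + 1) :=
  MonoidHom.mk' (fun l => blockDiagGL K l.1 l.2) fun a b => Units.ext <| by
    simp [blockDiagGL, GeneralLinearGroup.mkOfDetNeZero, submatrix_mul_equiv, fromBlocks_multiply]

theorem coe_blockDiagHom (l : GLn K n × GLn K 1) :
    (blockDiagHom l : Matrix (Fin (n + 1)) (Fin (n + 1)) K) =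
      (fromBlocks l.1.val 0 0 l.2.val).submatrix finSumFinEquiv.symm finSumFinEquiv.symm :=
  rfl

theorem glTranspose_blockDiagHom (l : GLn K n × GLn K 1) :
    glTranspose (blockDiagHom l) = blockDiagHom (Prod.map glTranspose glTranspose l) :=
  Units.ext <| by simp [coe_blockDiagHom, fromBlocks_transpose]

/-- The unipotent matrix `[1, v; 0, 1]` with last column `(v, 1)`. -/
noncomputable def unipotentCol (v : Matrix (Fin n) (Fin 1) K) : GLn K (n + 1) :=
  GeneralLinearGroup.mkOfDetNeZero
    ((fromBlocks 1 v 0 1).submatrix finSumFinEquiv.symm finSumFinEquiv.symm) (by simp)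

theorem coe_unipotentCol (v : Matrix (Fin n) (Fin 1) K) :
    (unipotentCol v : Matrix (Fin (n + 1)) (Fin (n + 1)) K) =
      (fromBlocks 1 v 0 1).submatrix finSumFinEquiv.symm finSumFinEquiv.symm :=
  rfl

theorem isUcol_unipotentCol (v : Matrix (Fin n) (Fin 1) K) : IsUcol K (unipotentCol v) := by
  refine ⟨fun i => ?_, fun i j hij hj => ?_⟩
  · obtain ⟨i | i, rfl⟩ := finSumFinEquiv.surjective i <;> simp [coe_unipotentCol]
  · obtain ⟨i, rfl⟩ := finSumFinEquiv.surjective i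
    obtain ⟨j | j, rfl⟩ := finSumFinEquiv.surjective j
    · obtain i | i := i
      · simpa [coe_unipotentCol, one_apply] using hij
      · simp [coe_unipotentCol]
    · exact absurd (by simp [Fin.ext_iff]) hj

theorem exists_isUcol_glTranspose_mul_blockDiagHom_eq (g : GLn K (n + 1)) :
    ∃ u, IsUcol K u ∧ ∃ l : GLn K n × GLn K 1,
      glTranspose (g * u) * blockDiagHom l = blockDiagHom l * (g * u) := by
  let M := g.val.submatrix (finSumFinEquiv (m := n) (n := 1)) finSumFinEquiv
  have hM : IsUnit (fromBlocks M.toBlocks₁₁ M.toBlocks₁₂ M.toBlocks₂₁ M.toBlocks₂₂) := by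
    rw [fromBlocks_toBlocks]
    exact (isUnit_submatrix_equiv _ _).2 g.isUnit
  obtain ⟨S, v, hS, hSg⟩ := exists_isSymm_fromBlocks_mul_isSymm hM
  have hl : glTranspose (blockDiagHom (S, 1)) = blockDiagHom ((S, 1) : GLn K n × GLn K 1) := by
    rw [glTranspose_blockDiagHom]
    exact congrArg blockDiagHom (Prod.ext (Units.ext hS) (Units.ext transpose_one))
  have hsymm : glTranspose (blockDiagHom (S, 1) * (g * unipotentCol v)) =
      blockDiagHom (S, 1) * (g * unipotentCol v) := by
    have hg : g.val = M.submatrix finSumFinEquiv.symm finSumFinEquiv.symm := by simp [M]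
    rw [fromBlocks_toBlocks] at hSg
    refine Units.ext ?_
    simp only [coe_glTranspose, Units.val_mul, coe_blockDiagHom, coe_unipotentCol, hg,
      submatrix_mul_equiv]
    exact hSg.submatrix finSumFinEquiv.symm
  refine ⟨unipotentCol v, isUcol_unipotentCol v, (S, 1), ?_⟩
  rw [← hsymm, isAntiInvolution_glTranspose.map_mul (blockDiagHom _), hl]

end Parabolic

theorem eq_of_forall_trace_mul_eq {R M : Type*} [CommRing R] [AddCommGroup M] [Module R M]
    [Module.Free R M] [Module.Finite R M] {X Y : Module.End R M}
    (h : ∀ Z : Module.End R M, LinearMap.trace R M (Z * X) = LinearMap.trace R M (Z * Y)) :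
    X = Y := by
  ext v
  refine sub_eq_zero.1 <| (Module.forall_dual_apply_eq_zero_iff R _).1 fun ξ => ?_
  have hrankOne (Z : Module.End R M) : LinearMap.trace R M (ξ.smulRight v * Z) = ξ (Z v) := by
    have hcomp : Z * ξ.smulRight v = ξ.smulRight (Z v) := LinearMap.ext fun w => by simp
    rw [LinearMap.trace_mul_comm, hcomp, LinearMap.trace_smulRight]
  rw [map_sub, ← hrankOne, ← hrankOne, h, sub_self]

section Burnside

variable {k G V : Type*} [Field k] [IsAlgClosed k] [Monoid G] [AddCommGroup V] [Module k V]
  [FiniteDimensional k V] (π : Representation k G V) [π.IsIrreducible]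

/-- Burnside's theorem: by Schur's lemma every linear map commutes with the endomorphisms of the
simple module `V`, so Jacobson density realises it on a basis. -/
theorem surjective_asAlgebraHom_of_isIrreducible : Function.Surjective π.asAlgebraHom := by
  classical
  intro X
  have hschur := IsSimpleModule.algebraMap_end_bijective_of_isAlgClosed
    (k := k) (A := MonoidAlgebra k G) (V := π.asModule)
  let Y : Module.End (Module.End (MonoidAlgebra k G) π.asModule) π.asModule :=
    { toFun := fun v => π.asModuleEquiv.symm (X (π.asModuleEquiv v))
      map_add' := fun v w => by simp only [map_add]
      map_smul' := fun c v => by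
        obtain ⟨z, rfl⟩ := hschur.2 c
        simp }
  let b := Module.finBasis k V
  obtain ⟨r, hr⟩ := jacobson_density Y (Finset.univ.image fun i => π.asModuleEquiv.symm (b i))
  refine ⟨r, b.ext fun i => ?_⟩
  have hri := congrArg π.asModuleEquiv (hr _ (Finset.mem_image_of_mem _ (Finset.mem_univ i)))
  simpa [Y] using hri.symm

theorem span_range_eq_top_of_isIrreducible : Submodule.span k (Set.range π) = ⊤ := by
  refine eq_top_iff.2 fun X _ => ?_
  obtain ⟨r, rfl⟩ := surjective_asAlgebraHom_of_isIrreducible π X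
  rw [Representation.asAlgebraHom_def, MonoidAlgebra.lift_apply]
  exact Submodule.sum_mem _ fun g _ => Submodule.smul_mem _ _ (Submodule.subset_span ⟨g, rfl⟩)

theorem eq_of_forall_trace_apply_mul_eq {X Y : Module.End k V}
    (h : ∀ g, LinearMap.trace k V (π g * X) = LinearMap.trace k V (π g * Y)) : X = Y := by
  have htrace : LinearMap.trace k V ∘ₗ LinearMap.mulRight k X =
      LinearMap.trace k V ∘ₗ LinearMap.mulRight k Y :=
    LinearMap.ext_on_range (span_range_eq_top_of_isIrreducible π) h
  exact eq_of_forall_trace_mul_eq fun Z => LinearMap.congr_fun htrace Z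

end Burnside

section ContravariantForm

variable {k G V W : Type*} [Field k] [AddCommGroup V] [Module k V]
  [AddCommGroup W] [Module k W]

/-- A nondegenerate bilinear form for which the adjoint of `π g` is `π (τ g)`; for `G = GL(n)` and
`τ` the transpose these are the contravariant forms. -/
structure IsContravariantForm [Monoid G] (π : Representation k G V) (τ : G → G)
    (B : LinearMap.BilinForm k V) : Prop where
  nondegenerate : B.Nondegenerate
  isAdjointPair : ∀ g, B.IsAdjointPair B (π g) (π (τ g))

theorem exists_isAdjointPair_of_nondegenerate [FiniteDimensional k W]
    (B : LinearMap.BilinForm k V) {C : LinearMap.BilinForm k W} (hC : C.Nondegenerate)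
    (f : W →ₗ[k] V) : ∃ p : V →ₗ[k] W, B.IsAdjointPair C p f :=
  ⟨(C.toDual hC).symm ∘ₗ f.dualMap ∘ₗ B, fun v w => by
    simp [LinearMap.BilinForm.apply_toDual_symm_apply]⟩

theorem trace_eq_of_isAdjointPair [FiniteDimensional k V] {B : LinearMap.BilinForm k V}
    (hB : B.Nondegenerate) {X Y : Module.End k V} (h : B.IsAdjointPair B X Y) :
    LinearMap.trace k V X = LinearMap.trace k V Y := by
  have hconj : (B.toDual hB).conj X = Module.Dual.transpose Y := by
    ext ξ w
    obtain ⟨v, rfl⟩ := (B.toDual hB).surjective ξ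
    simpa [LinearEquiv.conj_apply, Module.Dual.transpose_apply, LinearMap.BilinForm.toDual_def]
      using h v w
  rw [← LinearMap.trace_conj' X (B.toDual hB), hconj, LinearMap.trace_transpose']

theorem trace_eq_of_isConj {R M : Type*} [CommRing R] [AddCommGroup M] [Module R M]
    {X Y : Module.End R M} (h : IsConj X Y) : LinearMap.trace R M X = LinearMap.trace R M Y := by
  obtain ⟨c, hc⟩ := h
  rw [← LinearMap.trace_conj R X c, hc.eq, mul_assoc, Units.mul_inv, mul_one]

variable [Monoid G] [FiniteDimensional k V] {π : Representation k G V} [π.IsIrreducible]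
  {τ : G → G}

theorem nondegenerate_of_forall_isAdjointPair {B : LinearMap.BilinForm k V} (hB_ne : B ≠ 0)
    (hB : ∀ g, B.IsAdjointPair B (π g) (π (τ g))) : B.Nondegenerate := by
  rw [LinearMap.BilinForm.nondegenerate_iff_ker_eq_bot]
  let S : Subrepresentation π := ⟨LinearMap.ker B, fun g x hx => LinearMap.ext fun y => by
    simp [hB g x y, LinearMap.mem_ker.1 hx]⟩
  rcases eq_bot_or_eq_top S with hS | hS
  · exact congrArg Subrepresentation.toSubmodule hS
  · exact absurd (LinearMap.ker_eq_top.1 (congrArg Subrepresentation.toSubmodule hS)) hB_ne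

variable [IsAlgClosed k]

theorem IsContravariantForm.isSelfAdjoint_of_forall_trace_eq {B : LinearMap.BilinForm k V}
    (hB : IsContravariantForm π τ B) (hτ : Function.Surjective τ) {X : Module.End k V}
    (hX : ∀ g, LinearMap.trace k V (π (τ g) * X) = LinearMap.trace k V (π g * X)) :
    B.IsSelfAdjoint X := by
  obtain ⟨Y, hY⟩ := exists_isAdjointPair_of_nondegenerate B.flip hB.nondegenerate.flip X
  have hXY : B.IsAdjointPair B X Y := fun v w => (hY w v).symm
  suffices X = Y by rwa [← this] at hXY
  refine eq_of_forall_trace_apply_mul_eq π (hτ.forall.2 fun g => ?_)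
  calc LinearMap.trace k V (π (τ g) * X)
    _ = LinearMap.trace k V (X * π g) := by rw [hX, LinearMap.trace_mul_comm]
    _ = LinearMap.trace k V (π (τ g) * Y) :=
      trace_eq_of_isAdjointPair hB.nondegenerate (hXY.mul (hB.isAdjointPair g))

/-- `θ` is well defined since a relation `∑ r_h π(h) = 0` gives
`∑ r_h tr(π(τ h) π(τ g)) = ∑ r_h tr π(g h) = 0` for all `g`. -/
theorem exists_linearMap_apply_eq_apply (hτ : IsAntiInvolution τ)
    (htrace : ∀ g, LinearMap.trace k V (π (τ g)) = LinearMap.trace k V (π g)) :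
    ∃ θ : Module.End k V →ₗ[k] Module.End k V, ∀ g, θ (π g) = π (τ g) := by
  let P := Finsupp.linearCombination k π
  let Q := Finsupp.linearCombination k (π ∘ τ)
  have hPQ : LinearMap.ker P ≤ LinearMap.ker Q := fun r hr => by
    refine eq_of_forall_trace_apply_mul_eq π (hτ.involutive.surjective.forall.2 fun g => ?_)
    have hcomp : LinearMap.trace k V ∘ₗ LinearMap.mulLeft k (π (τ g)) ∘ₗ Q =
        LinearMap.trace k V ∘ₗ LinearMap.mulRight k (π g) ∘ₗ P := by
      ext h
      simp [P, Q, ← map_mul, ← hτ.map_mul, htrace]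
    simpa [LinearMap.mem_ker.1 hr] using LinearMap.congr_fun hcomp r
  have hP : LinearMap.range P = ⊤ := by
    rw [Finsupp.range_linearCombination, span_range_eq_top_of_isIrreducible]
  obtain ⟨s, hs⟩ := P.exists_rightInverse_of_surjective hP
  refine ⟨Q ∘ₗ s, fun g => ?_⟩
  have hmem : s (π g) - Finsupp.single g 1 ∈ LinearMap.ker P := by
    simpa [sub_eq_zero, P] using LinearMap.congr_fun hs (π g)
  simpa [sub_eq_zero, Q] using hPQ hmem

theorem exists_isContravariantForm (hτ : IsAntiInvolution τ)
    (htrace : ∀ g, LinearMap.trace k V (π (τ g)) = LinearMap.trace k V (π g)) :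
    ∃ B : LinearMap.BilinForm k V, IsContravariantForm π τ B := by
  obtain ⟨θ, hθ⟩ := exists_linearMap_apply_eq_apply (π := π) hτ htrace
  have hspan := span_range_eq_top_of_isIrreducible π
  have hθ_trace : LinearMap.trace k V ∘ₗ θ = LinearMap.trace k V :=
    LinearMap.ext_on_range hspan fun g => by simp [hθ, htrace]
  have hθ_mul (g : G) : θ ∘ₗ LinearMap.mulLeft k (π g) = LinearMap.mulRight k (π (τ g)) ∘ₗ θ :=
    LinearMap.ext_on_range hspan fun h => by simp [hθ, ← map_mul, hτ.map_mul]
  have hdual {v : V} (hv : v ≠ 0) : ∃ ξ : Module.Dual k V, ξ v ≠ 0 :=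
    not_forall.1 ((Module.forall_dual_apply_eq_zero_iff k v).not.2 hv)
  have : Nontrivial V := IsSimpleModule.nontrivial (MonoidAlgebra k G) π.asModule
  obtain ⟨v, hv⟩ := exists_ne (0 : V)
  obtain ⟨ξ, hξ⟩ := hdual hv
  have hT : θ (ξ.smulRight v) ≠ 0 := fun h => hξ <| by
    simpa [h] using (LinearMap.congr_fun hθ_trace (ξ.smulRight v)).symm
  obtain ⟨w, hw⟩ := DFunLike.ne_iff.1 hT
  obtain ⟨η, hη⟩ := hdual hw
  let B : LinearMap.BilinForm k V := (θ ∘ₗ LinearMap.smulRightₗ ξ).compr₂ η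
  have hB_ne : B ≠ 0 := fun h => hη (by simpa [B] using LinearMap.congr_fun₂ h v w)
  have hB (g : G) : B.IsAdjointPair B (π g) (π (τ g)) := fun x y => by
    have hrankOne : ξ.smulRight (π g x) = π g * ξ.smulRight x := LinearMap.ext fun z => by simp
    have hθx : θ (π g * ξ.smulRight x) = θ (ξ.smulRight x) * π (τ g) :=
      LinearMap.congr_fun (hθ_mul g) _
    simp [B, LinearMap.smulRightₗ_apply, hrankOne, hθx]
  exact ⟨B, nondegenerate_of_forall_isAdjointPair hB_ne hB, hB⟩

end ContravariantForm

section InvariantIntertwiners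

variable {k G L V W : Type*} [Field k] [Monoid G] [AddCommGroup V] [Module k V]
  [AddCommGroup W] [Module k W]

section Monoid

variable [Monoid L]

/-- The `L`-equivariant maps from `σ` to the restriction of `π` along `φ` whose image consists of
`U`-invariant vectors; its dimension is the multiplicity of `σ` in `V^U`. It is a space of maps into
`V` rather than `V^U`, which carries an action of `L` only if `φ` normalises `U`. -/
def invariantIntertwiners (σ : Representation k L W) (π : Representation k G V) (φ : L →* G)
    (U : Set G) : Submodule k (W →ₗ[k] V) where
  carrier := {f | (∀ l w, f (σ l w) = π (φ l) (f w)) ∧ ∀ u ∈ U, ∀ w, π u (f w) = f w}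
  add_mem' hf hg := ⟨fun l w => by simp [hf.1 l w, hg.1 l w],
    fun u hu w => by simp [hf.2 u hu w, hg.2 u hu w]⟩
  zero_mem' := by simp
  smul_mem' c f hf := ⟨fun l w => by simp [hf.1 l w], fun u hu w => by simp [hf.2 u hu w]⟩

theorem exists_smul_eq_of_range_le [IsAlgClosed k] [FiniteDimensional k W]
    {σ : Representation k L W} [σ.IsIrreducible] {ρ : Representation k L V}
    {f₁ f₂ : σ.IntertwiningMap ρ} (hf₁ : Function.Injective f₁)
    (hrange : LinearMap.range f₂.toLinearMap ≤ LinearMap.range f₁.toLinearMap) :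
    ∃ c : k, c • f₁.toLinearMap = f₂.toLinearMap := by
  obtain ⟨r, hr⟩ := f₁.toLinearMap.exists_leftInverse_of_injective (LinearMap.ker_eq_bot.2 hf₁)
  have hf₁r (w : W) : f₁ (r (f₂ w)) = f₂ w := by
    obtain ⟨w', hw'⟩ := hrange ⟨w, rfl⟩
    have hw' : f₁ w' = f₂ w := hw'
    rw [← hw']
    exact congrArg f₁ (LinearMap.congr_fun hr w')
  let e : σ.IntertwiningMap σ := ⟨r ∘ₗ f₂.toLinearMap, fun l => LinearMap.ext fun w => hf₁ <| calc
    f₁ (r (f₂ (σ l w))) = ρ l (f₂ w) := by rw [hf₁r, f₂.isIntertwining]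
    _ = f₁ (σ l (r (f₂ w))) := by rw [f₁.isIntertwining, hf₁r]⟩
  obtain ⟨c, hc⟩ :=
    Representation.IsIrreducible.algebraMap_intertwiningMap_bijective_of_isAlgClosed.2 e
  refine ⟨c, LinearMap.ext fun w => ?_⟩
  have hcw : c • w = r (f₂ w) := congrArg (· w) hc
  calc c • f₁ w = f₁ (c • w) := (map_smul f₁ c w).symm
    _ = f₂ w := by rw [hcw, hf₁r]

variable {σ : Representation k L W} {π : Representation k G V} {φ : L →* G} {U : Set G}
  {τ : G → G} {t : L → L} {B : LinearMap.BilinForm k V} {C : LinearMap.BilinForm k W}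
  {f f₁ f₂ : W →ₗ[k] V} {p : V →ₗ[k] W}

theorem apply_apply_eq_of_isAdjointPair (hB : IsContravariantForm π τ B)
    (hC : IsContravariantForm σ t C) (hφ : ∀ l, τ (φ l) = φ (t l))
    (hf : f ∈ invariantIntertwiners σ π φ U) (hp : B.IsAdjointPair C p f) (l : L) (v : V) :
    p (π (φ l) v) = σ l (p v) := by
  refine sub_eq_zero.1 (hC.nondegenerate.1 _ fun w => ?_)
  have h : C (p (π (φ l) v)) w = C (σ l (p v)) w := by
    rw [hp, hB.isAdjointPair, hφ, ← hf.1, ← hp, hC.isAdjointPair]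
  rw [map_sub, LinearMap.sub_apply, h, sub_self]

theorem apply_apply_eq_self_of_isAdjointPair (hτ : Function.Involutive τ)
    (hB : IsContravariantForm π τ B) (hC : C.Nondegenerate)
    (hf : f ∈ invariantIntertwiners σ π φ U) (hp : B.IsAdjointPair C p f) {u : G} (hu : u ∈ U)
    (v : V) : p (π (τ u) v) = p v := by
  refine sub_eq_zero.1 (hC.1 _ fun w => ?_)
  have h : C (p (π (τ u) v)) w = C (p v) w := by
    rw [hp, hB.isAdjointPair, hτ, hf.2 u hu, ← hp]
  rw [map_sub, LinearMap.sub_apply, h, sub_self]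

theorem surjective_of_isAdjointPair [FiniteDimensional k W] (hB : B.Nondegenerate)
    (hC : C.Nondegenerate) (hf : Function.Injective f) (hp : B.IsAdjointPair C p f) :
    Function.Surjective p := by
  rw [← LinearMap.dualMap_injective_iff, injective_iff_map_eq_zero]
  intro ξ hξ
  obtain ⟨w, rfl⟩ := (LinearMap.BilinForm.toDual C.flip hC.flip).surjective ξ
  have hw : f w = 0 := hB.2 _ fun v => (hp v w).symm.trans (LinearMap.congr_fun hξ v)
  rw [hf (hw.trans (map_zero f).symm), map_zero]

/-- If `Z ∘ f₁ = f₂` and `Z'` is the right adjoint of `Z`, then taking adjoints in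
`f₂ ∘ p = Z ∘ (f₁ ∘ p)` gives `f₂ ∘ p = (f₁ ∘ p) ∘ Z'`. -/
theorem range_le_range_of_isSelfAdjoint_comp [FiniteDimensional k V] (hB : B.Nondegenerate)
    (hf₁ : Function.Injective f₁) (hp : Function.Surjective p)
    (h₁ : B.IsSelfAdjoint (f₁ ∘ₗ p)) (h₂ : B.IsSelfAdjoint (f₂ ∘ₗ p)) :
    LinearMap.range f₂ ≤ LinearMap.range f₁ := by
  obtain ⟨r, hr⟩ := f₁.exists_leftInverse_of_injective (LinearMap.ker_eq_bot.2 hf₁)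
  obtain ⟨Z', hZ'⟩ := exists_isAdjointPair_of_nondegenerate B.flip hB.flip (f₂ ∘ₗ r)
  rintro _ ⟨w, rfl⟩
  obtain ⟨v, rfl⟩ := hp w
  refine ⟨p (Z' v), (sub_eq_zero.1 (hB.2 _ fun x => ?_)).symm⟩
  have hrf (w : W) : r (f₁ w) = w := LinearMap.congr_fun hr w
  have h : B x (f₂ (p v)) = B x (f₁ (p (Z' v))) := calc
    B x (f₂ (p v)) = B (f₂ (p x)) v := (h₂ x v).symm
    _ = B ((f₂ ∘ₗ r) (f₁ (p x))) v := by rw [LinearMap.comp_apply, hrf]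
    _ = B (f₁ (p x)) (Z' v) := (hZ' v (f₁ (p x))).symm
    _ = B x (f₁ (p (Z' v))) := h₁ x (Z' v)
  rw [map_sub, h, sub_self]

end Monoid

section Group

variable [Group L]

theorem trace_apply_mul_eq_of_exists_mul_eq (π : Representation k G V) {φ : L →* G} {τ : G → G}
    (hτ : IsAntiInvolution τ) {X : Module.End k V} {U : Set G}
    (hU : ∀ g, ∃ u ∈ U, ∃ l, τ (g * u) * φ l = φ l * (g * u))
    (hUX : ∀ u ∈ U, π u * X = X) (hXU : ∀ u ∈ U, X * π (τ u) = X)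
    (hX : ∀ l, Commute (π (φ l)) X) (g : G) :
    LinearMap.trace k V (π (τ g) * X) = LinearMap.trace k V (π g * X) := by
  obtain ⟨u, hu, l, hl⟩ := hU g
  have hsemiconj : SemiconjBy (π (φ l)) (π (g * u) * X) (π (τ (g * u)) * X) :=
    SemiconjBy.mul_right (by simp only [SemiconjBy, ← map_mul, hl]) (hX l)
  have hconj : IsConj (π (g * u) * X) (π (τ (g * u)) * X) :=
    ⟨Units.map (π.comp φ : L →* Module.End k V) (toUnits l), hsemiconj⟩
  calc LinearMap.trace k V (π (τ g) * X)
    _ = LinearMap.trace k V (π (τ g) * X * π (τ u)) := by rw [mul_assoc, hXU u hu]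
    _ = LinearMap.trace k V (π (τ (g * u)) * X) := by
      rw [LinearMap.trace_mul_comm, ← mul_assoc, ← map_mul, ← hτ.map_mul]
    _ = LinearMap.trace k V (π (g * u) * X) := (trace_eq_of_isConj hconj).symm
    _ = LinearMap.trace k V (π g * X) := by rw [map_mul π, mul_assoc, hUX u hu]

variable [IsAlgClosed k] [FiniteDimensional k V] {σ : Representation k L W}
  {π : Representation k G V} [π.IsIrreducible] {φ : L →* G} {U : Set G} {τ : G → G} {t : L → L}

theorem isSelfAdjoint_comp_of_isAdjointPair {B : LinearMap.BilinForm k V}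
    {C : LinearMap.BilinForm k W} {f₁ f₂ : W →ₗ[k] V} {p : V →ₗ[k] W} (hτ : IsAntiInvolution τ)
    (hφ : ∀ l, τ (φ l) = φ (t l))
    (hU : ∀ g, ∃ u ∈ U, ∃ l, τ (g * u) * φ l = φ l * (g * u))
    (hB : IsContravariantForm π τ B) (hC : IsContravariantForm σ t C)
    (hf₁ : f₁ ∈ invariantIntertwiners σ π φ U) (hf₂ : f₂ ∈ invariantIntertwiners σ π φ U)
    (hp : B.IsAdjointPair C p f₁) : B.IsSelfAdjoint (f₂ ∘ₗ p) := by
  refine hB.isSelfAdjoint_of_forall_trace_eq hτ.involutive.surjective <|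
    trace_apply_mul_eq_of_exists_mul_eq π hτ hU
      (fun u hu => LinearMap.ext fun v => hf₂.2 u hu (p v))
      (fun u hu => LinearMap.ext fun v => congrArg f₂ ?_)
      (fun l => LinearMap.ext fun v => ?_)
  · exact apply_apply_eq_self_of_isAdjointPair hτ.involutive hB hC.nondegenerate hf₁ hp hu v
  · simp [apply_apply_eq_of_isAdjointPair hB hC hφ hf₁ hp, hf₂.1]

/-- Gelfand's trick: `hU` says that, up to right translation by `U`, the anti-involution `τ` fixes
every `L`-conjugacy class. -/
theorem finrank_invariantIntertwiners_le_one [σ.IsIrreducible]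
    (hτ : IsAntiInvolution τ) (ht : IsAntiInvolution t)
    (hτ_conj : ∀ g, IsConj g (τ g)) (ht_conj : ∀ l, IsConj l (t l))
    (hφ : ∀ l, τ (φ l) = φ (t l))
    (hU : ∀ g, ∃ u ∈ U, ∃ l, τ (g * u) * φ l = φ l * (g * u)) :
    Module.finrank k (invariantIntertwiners σ π φ U) ≤ 1 := by
  by_cases hzero : ∀ f : invariantIntertwiners σ π φ U, f = 0
  · have : Subsingleton (invariantIntertwiners σ π φ U) := ⟨fun f g => by rw [hzero f, hzero g]⟩
    simp only [Module.finrank_zero_of_subsingleton, zero_le]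
  push Not at hzero
  obtain ⟨⟨f₁, hf₁⟩, hf₁_ne⟩ := hzero
  let toIntertwiningMap (f : invariantIntertwiners σ π φ U) :
      σ.IntertwiningMap (π.comp φ : Representation k L V) :=
    ⟨f.1, fun l => LinearMap.ext (f.2.1 l)⟩
  have hinj : Function.Injective f₁ :=
    (Representation.IsIrreducible.injective_or_eq_zero (toIntertwiningMap ⟨f₁, hf₁⟩)).resolve_right
      fun h => hf₁_ne (Subtype.ext (congrArg (·.toLinearMap) h))
  have : FiniteDimensional k W := .of_injective f₁ hinj
  obtain ⟨B, hB⟩ := exists_isContravariantForm (π := π) hτ fun g =>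
    (trace_eq_of_isConj (π.map_isConj (hτ_conj g))).symm
  obtain ⟨C, hC⟩ := exists_isContravariantForm (π := σ) ht fun l =>
    (trace_eq_of_isConj (σ.map_isConj (ht_conj l))).symm
  obtain ⟨p, hp⟩ := exists_isAdjointPair_of_nondegenerate B hC.nondegenerate f₁
  have hself {f : W →ₗ[k] V} (hf : f ∈ invariantIntertwiners σ π φ U) :
      B.IsSelfAdjoint (f ∘ₗ p) :=
    isSelfAdjoint_comp_of_isAdjointPair hτ hφ hU hB hC hf₁ hf hp
  refine finrank_le_one ⟨f₁, hf₁⟩ fun f => ?_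
  have hrange : LinearMap.range f.1 ≤ LinearMap.range f₁ :=
    range_le_range_of_isSelfAdjoint_comp hB.nondegenerate hinj
      (surjective_of_isAdjointPair hB.nondegenerate hC.nondegenerate hinj hp)
      (hself hf₁) (hself f.2)
  obtain ⟨c, hc⟩ := exists_smul_eq_of_range_le (f₁ := toIntertwiningMap ⟨f₁, hf₁⟩)
    (f₂ := toIntertwiningMap f) hinj hrange
  exact ⟨c, Subtype.ext hc⟩

end Group

end InvariantIntertwiners

theorem isIrreducible_of_forall_eq_bot_or_eq_top {k G V : Type*} [Field k] [Monoid G]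
    [AddCommGroup V] [Module k V] [Nontrivial V] {π : Representation k G V}
    (hπ : ∀ S : Submodule k V, (∀ g, ∀ v ∈ S, π g v ∈ S) → S = ⊥ ∨ S = ⊤) :
    π.IsIrreducible where
  exists_pair_ne := ⟨⊥, ⊤, fun h =>
    bot_ne_top (α := Submodule k V) (congrArg Subrepresentation.toSubmodule h)⟩
  eq_bot_or_eq_top S :=
    (hπ S.toSubmodule fun g _ hv => S.apply_mem_toSubmodule g hv).imp
      (fun h => Subrepresentation.toSubmodule_injective h)
      (fun h => Subrepresentation.toSubmodule_injective h)

theorem homSpace_eq_invariantIntertwiners {K V W : Type} [Field K] {n : ℕ} [AddCommGroup V]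
    [Module ℂ V] [AddCommGroup W] [Module ℂ W] (π : Representation ℂ (GLn K (n + 1)) V)
    (σ : Representation ℂ (GLn K n × GLn K 1) W) :
    homSpace K π σ = invariantIntertwiners σ π blockDiagHom {u | IsUcol K u} := by
  ext f
  exact ⟨fun h => ⟨h.2, fun u hu w => h.1 w u hu⟩, fun h => ⟨fun w u hu => h.2 u hu w, h.1⟩⟩

theorem parabolic_branching_multiplicity_free_general {K : Type} {k V W : Type*} [Field K] [Field k]
    [IsAlgClosed k] {n : ℕ} [AddCommGroup V] [Module k V] [FiniteDimensional k V]
    (π : Representation k (GLn K (n + 1)) V) [π.IsIrreducible] [AddCommGroup W] [Module k W]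
    (σ : Representation k (GLn K n × GLn K 1) W) [σ.IsIrreducible] :
    Module.finrank k (invariantIntertwiners σ π blockDiagHom {u | IsUcol K u}) ≤ 1 :=
  finrank_invariantIntertwiners_le_one isAntiInvolution_glTranspose
    (isAntiInvolution_glTranspose.prodMap isAntiInvolution_glTranspose) isConj_glTranspose
    (fun l => isConj_prodMk (isConj_glTranspose l.1) (isConj_glTranspose l.2))
    glTranspose_blockDiagHom exists_isUcol_glTranspose_mul_blockDiagHom_eq

/-- **Multiplicity-freeness of parabolic branching**: for every irreducible complex
representation `(π, V)` of `GL(n+1,q)` and every irreducible complex representation `(σ, W)`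
of `GL(n,q) × GL(1,q)`, the representation `σ` occurs in the `GL(n,q) × GL(1,q)`-representation
`V^U` with multiplicity at most `1`. -/
theorem parabolic_branching_multiplicity_free (n : ℕ)
    (V : Type) [AddCommGroup V] [Module ℂ V] [FiniteDimensional ℂ V] [Nontrivial V]
    (π : Representation ℂ (GLn F (n + 1)) V)
    (hπ : ∀ S : Submodule ℂ V, (∀ g : GLn F (n + 1), ∀ v ∈ S, π g v ∈ S) → S = ⊥ ∨ S = ⊤)
    (W : Type) [AddCommGroup W] [Module ℂ W] [FiniteDimensional ℂ W] [Nontrivial W]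
    (σ : Representation ℂ (GLn F n × GLn F 1) W)
    (hσ : ∀ S : Submodule ℂ W, (∀ h : GLn F n × GLn F 1, ∀ w ∈ S, σ h w ∈ S) → S = ⊥ ∨ S = ⊤) :
    Module.finrank ℂ (homSpace F π σ) ≤ 1 := by
  have := isIrreducible_of_forall_eq_bot_or_eq_top hπ
  have := isIrreducible_of_forall_eq_bot_or_eq_top hσ
  rw [homSpace_eq_invariantIntertwiners]
  exact parabolic_branching_multiplicity_free_general π σ
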